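/- Fix positive integers u and m and a vector v ∈ F^n, and let I_{v,m} = ⟨z − h_v, η⟩^m ⊆ R[z]. Suppose f ∈ I_{v,m} is nonzero and write f uniquely as an F-linear combination of monomials x^i y^j z^k with 0 ≤ j ≤ q−1; let w = deg_u(f) be the maximum of q·i + (q+1)·j + u·k over the monomials appearing. Let M ∈ F[X,Y] be such that its residue class μ in R has deg_u(μ) ≤ u (i.e., μ ∈ L(uP∞)), let c = (M(P_1),…,M(P_n)) and t = d(v, c) the number of indices i with v_i ≠ M(P_i). If t < n − w/m, then f(μ) = 0 in R, where f(μ) denotes the result of substituting z by μ in f. -/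

import Mathlib

set_option synthInstance.maxHeartbeats 1000000
set_option maxHeartbeats 1000000

open MvPolynomial

/-- The polynomial `H_i ∈ F[X,Y]` attached to the rational point `(α, β)` of the Hermitian
curve: `H = −∏_{a ∈ F, a ≠ α} (X − a) · ∏_{b ∈ F, b ≠ β, b^q + b = β^q + β} (Y − b)`. -/
noncomputable def Hpoly (q : ℕ) {F : Type*} [Field F] [Fintype F] [DecidableEq F]
    (α β : F) : MvPolynomial (Fin 2) F :=
  -((∏ a ∈ Finset.univ.erase α, (X 0 - C a)) *
    ∏ b ∈ (Finset.univ.filter fun b : F => b ^ q + b = β ^ q + β).erase β, (Y - C b))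
  where Y : MvPolynomial (Fin 2) F := X 1

/-- The `F`-linear combination of the monomials `X^i Y^j Z^k` (`0 ≤ j ≤ q−1`) of `F[X,Y,Z]`
with coefficient family `c`. -/
noncomputable def monoSum3 {q : ℕ} {F : Type*} [Field F] (c : (ℕ × Fin q × ℕ) →₀ F) :
    MvPolynomial (Fin 3) F :=
  ∑ p ∈ c.support, C (c p) * X 0 ^ p.1 * X 1 ^ (p.2.1 : ℕ) * X 2 ^ p.2.2

/-!
Suppose `g = f(μ)` is a nonzero function on the Hermitian curve, and view the coordinate ring `S`
as a free module of rank `q + 1` over `F[y]`. The dimension of `S / (g)` over `F` is the degree of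
the norm of `g`, a determinant whose entries are controlled by the pole orders `q` of `x` and
`q + 1` of `y`; this gives `dim S / (g) ≤ deg_u f = w`. On the other hand, at each point where `v`
agrees with `μ`, the generators `z - h_v` and `η` become functions vanishing at the point, so `g`
lies in the `m`-th power of its maximal ideal. By the Chinese remainder theorem the `n - t` such
points contribute at least `m (n - t) > w` to `dim S / (g)`.
-/

open scoped Polynomial

section QuotientDimension

variable {K R : Type*} [CommRing R]

section

variable [CommRing K] [Algebra K R]

theorem finite_quotient_of_le {I J : Ideal R} (hIJ : I ≤ J) [Module.Finite K (R ⧸ I)] :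
    Module.Finite K (R ⧸ J) :=
  .of_surjective (Ideal.Quotient.factorₐ K hIJ).toLinearMap (Ideal.Quotient.factor_surjective hIJ)

theorem ker_injective_algHom : Function.Injective fun φ : R →ₐ[K] K => RingHom.ker φ := by
  refine fun φ ψ hker => AlgHom.ext fun r => ?_
  have hr : r - algebraMap K R (φ r) ∈ RingHom.ker φ := by simp [RingHom.mem_ker]
  have hr' : r - algebraMap K R (φ r) ∈ RingHom.ker ψ := hker.le hr
  rw [RingHom.mem_ker, map_sub, AlgHom.commutes, sub_eq_zero] at hr'
  exact hr'.symm

end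

theorem pow_succ_lt_pow_of_isNoetherianRing [IsNoetherianRing R] [IsDomain R] {I : Ideal R}
    (hbot : I ≠ ⊥) (htop : I ≠ ⊤) (n : ℕ) : I ^ (n + 1) < I ^ n := by
  refine (Ideal.pow_le_pow_right n.le_succ).lt_of_ne fun heq => pow_ne_zero n hbot ?_
  have hstable (k : ℕ) : I ^ n ≤ I ^ k := by
    rcases le_total k n with hk | hk
    · exact Ideal.pow_le_pow_right hk
    · induction k, hk using Nat.le_induction with
      | base => exact le_rfl
      | succ k _ ih => rw [← heq, pow_succ, pow_succ]; exact Ideal.mul_mono_left ih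
  exact le_bot_iff.1 (Ideal.iInf_pow_eq_bot_of_isDomain I htop ▸ le_iInf hstable)

variable [Field K] [Algebra K R]

theorem finrank_quotient_le_of_le {I J : Ideal R} (hIJ : I ≤ J) [Module.Finite K (R ⧸ I)] :
    Module.finrank K (R ⧸ J) ≤ Module.finrank K (R ⧸ I) :=
  LinearMap.finrank_le_finrank_of_surjective (f := (Ideal.Quotient.factorₐ K hIJ).toLinearMap)
    (Ideal.Quotient.factor_surjective hIJ)

theorem finrank_quotient_lt_of_lt {I J : Ideal R} (hIJ : I < J) [Module.Finite K (R ⧸ I)] :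
    Module.finrank K (R ⧸ J) < Module.finrank K (R ⧸ I) := by
  refine (finrank_quotient_le_of_le hIJ.le).lt_of_ne fun heq => hIJ.not_ge fun r hr => ?_
  have : Module.Finite K (R ⧸ J) := finite_quotient_of_le hIJ.le
  have hinj : Function.Injective (Ideal.Quotient.factorₐ K hIJ.le).toLinearMap :=
    (LinearMap.injective_iff_surjective_of_finrank_eq_finrank heq.symm).2
      (Ideal.Quotient.factor_surjective hIJ.le)
  refine Ideal.Quotient.eq_zero_iff_mem.1 (hinj ?_)
  rw [map_zero]
  exact Ideal.Quotient.eq_zero_iff_mem.2 hr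

theorem le_finrank_quotient_pow [IsNoetherianRing R] [IsDomain R] {I : Ideal R}
    (hbot : I ≠ ⊥) (htop : I ≠ ⊤) (n : ℕ) [hfin : Module.Finite K (R ⧸ I ^ n)] :
    n ≤ Module.finrank K (R ⧸ I ^ n) := by
  revert hfin
  induction n with
  | zero => exact Nat.zero_le _
  | succ n ih =>
    intro _
    have hlt := pow_succ_lt_pow_of_isNoetherianRing hbot htop n
    have : Module.Finite K (R ⧸ I ^ n) := finite_quotient_of_le hlt.le
    exact ih.trans_lt (finrank_quotient_lt_of_lt hlt)

theorem sum_finrank_quotient_le {ι : Type*} [Fintype ι] {I : ι → Ideal R} {J : Ideal R}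
    (hI : Pairwise (Function.onFun IsCoprime I)) (hJ : ∀ i, J ≤ I i) [Module.Finite K (R ⧸ J)] :
    ∑ i, Module.finrank K (R ⧸ I i) ≤ Module.finrank K (R ⧸ J) := by
  have (i : ι) : Module.Finite K (R ⧸ I i) := finite_quotient_of_le (hJ i)
  rw [← Module.finrank_pi_fintype]
  refine LinearMap.finrank_le_finrank_of_surjective
    (f := LinearMap.pi fun i => (Ideal.Quotient.factorₐ K (hJ i)).toLinearMap) fun r => ?_
  obtain ⟨s, hs⟩ := Ideal.pi_quotient_surjective hI r
  exact ⟨Ideal.Quotient.mk J s, funext hs⟩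

theorem mul_card_le_finrank_quotient [IsNoetherianRing R] [IsDomain R] {ι : Type*} [Fintype ι]
    {φ : ι → R →ₐ[K] K} (hφ : Function.Injective φ) (hker : ∀ i, RingHom.ker (φ i) ≠ ⊥)
    {J : Ideal R} {m : ℕ} (hJ : ∀ i, J ≤ RingHom.ker (φ i) ^ m) [Module.Finite K (R ⧸ J)] :
    m * Fintype.card ι ≤ Module.finrank K (R ⧸ J) := by
  have hmax (i : ι) : (RingHom.ker (φ i)).IsMaximal :=
    RingHom.ker_isMaximal_of_surjective _ fun a => ⟨algebraMap K R a, (φ i).commutes a⟩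
  have hcoprime : Pairwise (Function.onFun IsCoprime fun i => RingHom.ker (φ i) ^ m) :=
    fun i j hij => (Ideal.isCoprime_of_isMaximal fun h => hij (hφ (ker_injective_algHom h))).pow
  have (i : ι) : Module.Finite K (R ⧸ RingHom.ker (φ i) ^ m) := finite_quotient_of_le (hJ i)
  calc m * Fintype.card ι = ∑ _ : ι, m := by simp [mul_comm]
    _ ≤ ∑ i, Module.finrank K (R ⧸ RingHom.ker (φ i) ^ m) :=
      Finset.sum_le_sum fun i _ => le_finrank_quotient_pow (hker i) (hmax i).ne_top m
    _ ≤ Module.finrank K (R ⧸ J) := sum_finrank_quotient_le hcoprime hJ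

end QuotientDimension

theorem mul_natDegree_det_le {ι A : Type*} [Fintype ι] [DecidableEq ι] [CommRing A]
    {M : Matrix ι ι A[X]} {n w : ℕ} {e : ι → ℕ}
    (hM : ∀ i j, M i j ≠ 0 → n * (M i j).natDegree + e i ≤ w + e j) :
    n * M.det.natDegree ≤ Fintype.card ι * w := by
  suffices ∀ σ : Equiv.Perm ι, n * (∏ j, M (σ j) j).natDegree ≤ Fintype.card ι * w by
    rcases n.eq_zero_or_pos with rfl | hn
    · simp
    rw [mul_comm, ← Nat.le_div_iff_mul_le hn, Matrix.det_apply]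
    refine Polynomial.natDegree_sum_le_of_forall_le _ _ fun σ _ => ?_
    rw [Nat.le_div_iff_mul_le hn, mul_comm]
    exact (Nat.mul_le_mul_left n (Polynomial.natDegree_smul_le _ _)).trans (this σ)
  intro σ
  by_cases hzero : ∃ j, M (σ j) j = 0
  · obtain ⟨j, hj⟩ := hzero
    rw [Finset.prod_eq_zero (f := fun j => M (σ j) j) (Finset.mem_univ j) hj]
    simp
  push Not at hzero
  have hterm : ∑ j, (n * (M (σ j) j).natDegree + e (σ j)) ≤ ∑ j, (w + e j) :=
    Finset.sum_le_sum fun j _ => hM _ _ (hzero j)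
  rw [Finset.sum_add_distrib, Finset.sum_add_distrib, Equiv.sum_comp σ e, ← Finset.mul_sum,
    Finset.sum_const, Finset.card_univ, smul_eq_mul, add_le_add_iff_right] at hterm
  exact (Nat.mul_le_mul_left n (Polynomial.natDegree_prod_le _ _)).trans hterm

theorem finite_quotient_of_basis {K S ι : Type*} [Field K] [CommRing S] [IsDomain S]
    [Algebra K[X] S] [Algebra K S] [IsScalarTower K K[X] S] [Finite ι]
    (b : Module.Basis ι K[X] S) {I : Ideal S} (hI : I ≠ ⊥) : Module.Finite K (S ⧸ I) := by
  cases nonempty_fintype ι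
  have (i : ι) : Module.Finite K (K[X] ⧸ Ideal.span {I.smithCoeffs b hI i}) :=
    (AdjoinRoot.powerBasis (Ideal.smithCoeffs_ne_zero b I hI i)).finite
  exact .equiv (Ideal.quotientEquivDirectSum K b hI).symm

theorem irreducible_X_pow_sub_C_of_prime {R : Type*} [CommRing R] [IsDomain R] {p a : R}
    (hp : Prime p) (hpa : p ∣ a) (hpa2 : ¬ p ^ 2 ∣ a) {n : ℕ} (hn : n ≠ 0) :
    Irreducible (Polynomial.X ^ n - Polynomial.C a) := by
  have hprime : (Ideal.span {p}).IsPrime := (Ideal.span_singleton_prime hp.ne_zero).2 hp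
  have hdeg := Polynomial.degree_X_pow_sub_C (Nat.pos_of_ne_zero hn) a
  have hmonic := Polynomial.monic_X_pow_sub_C a hn
  refine Polynomial.irreducible_of_eisenstein_criterion hprime ?_ (fun k hk => ?_) ?_ ?_
    hmonic.isPrimitive
  · rw [hmonic.leadingCoeff]
    exact (Ideal.ne_top_iff_one _).1 hprime.ne_top
  · rw [hdeg, Nat.cast_lt] at hk
    rw [Polynomial.coeff_sub, Polynomial.coeff_X_pow, if_neg hk.ne, zero_sub, neg_mem_iff,
      Polynomial.coeff_C, Ideal.mem_span_singleton]
    split_ifs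
    · exact hpa
    · exact dvd_zero p
  · rw [hdeg]
    exact_mod_cast Nat.pos_of_ne_zero hn
  · simpa [Ideal.span_singleton_pow, Ideal.mem_span_singleton, hn.symm] using hpa2

section WeightFiltration

/-- The span of the monomials `x ^ i * y ^ j` of weight `a * i + b * j ≤ W`. On the Hermitian curve,
where `x` and `y` have poles of orders `a = q` and `b = q + 1` at infinity, it is the space
`L(W P∞)`. All exponents `i`, `j` are allowed, not only those of a basis of normal forms, so that
products are filtered by construction. -/
def weightFiltration (K : Type*) {S : Type*} [CommSemiring K] [CommSemiring S] [Algebra K S]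
    (x y : S) (a b W : ℕ) : Submodule K S :=
  Submodule.span K {s | ∃ i j, a * i + b * j ≤ W ∧ x ^ i * y ^ j = s}

variable {K S : Type*} [CommSemiring S] {x y : S} {a b V W : ℕ}

section

variable [CommSemiring K] [Algebra K S]

theorem monomial_mem_weightFiltration {i j : ℕ} (h : a * i + b * j ≤ W) :
    x ^ i * y ^ j ∈ weightFiltration K x y a b W :=
  Submodule.subset_span ⟨i, j, h, rfl⟩

theorem weightFiltration_mono (h : V ≤ W) :
    weightFiltration K x y a b V ≤ weightFiltration K x y a b W :=
  Submodule.span_mono fun _ ⟨i, j, hij, hs⟩ => ⟨i, j, hij.trans h, hs⟩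

theorem mul_mem_weightFiltration {s t : S} (hs : s ∈ weightFiltration K x y a b V)
    (ht : t ∈ weightFiltration K x y a b W) : s * t ∈ weightFiltration K x y a b (V + W) := by
  refine (Submodule.span_mul_span K _ _).le.trans (Submodule.span_mono ?_)
    (Submodule.mul_mem_mul hs ht)
  rintro _ ⟨_, ⟨i, j, hij, rfl⟩, _, ⟨k, l, hkl, rfl⟩, rfl⟩
  exact ⟨i + k, j + l, by linarith, by ring⟩

theorem pow_mem_weightFiltration {s : S} (hs : s ∈ weightFiltration K x y a b W) (n : ℕ) :
    s ^ n ∈ weightFiltration K x y a b (W * n) := by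
  induction n with
  | zero =>
    simpa using monomial_mem_weightFiltration (K := K) (x := x) (y := y)
      (show a * 0 + b * 0 ≤ 0 by simp)
  | succ n ih => exact pow_succ s n ▸ mul_mem_weightFiltration ih hs

theorem aeval_sum_mem_weightFiltration {n : ℕ} {c : (ℕ × Fin n) →₀ K}
    (hc : ∀ p ∈ c.support, a * p.1 + b * p.2 ≤ W) :
    aeval ![x, y] (∑ p ∈ c.support, C (c p) * X 0 ^ p.1 * X 1 ^ (p.2 : ℕ)) ∈
      weightFiltration K x y a b W := by
  rw [map_sum]
  refine Submodule.sum_mem _ fun p hp => ?_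
  simpa [mul_assoc, Algebra.smul_def] using
    Submodule.smul_mem _ (c p) (monomial_mem_weightFiltration (hc p hp))

end

theorem aeval_monoSum3_mem_weightFiltration [Field K] [Algebra K S] {n u : ℕ}
    {c : (ℕ × Fin n × ℕ) →₀ K} {s : S}
    (hs : s ∈ weightFiltration K x y a b u)
    (hc : ∀ p ∈ c.support, a * p.1 + b * (p.2.1 : ℕ) + u * p.2.2 ≤ W) :
    aeval ![x, y, s] (monoSum3 c) ∈ weightFiltration K x y a b W := by
  rw [monoSum3, map_sum]
  refine Submodule.sum_mem _ fun p hp => weightFiltration_mono (hc p hp) ?_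
  simpa [mul_assoc, Algebra.smul_def] using Submodule.smul_mem _ (c p)
    (mul_mem_weightFiltration (monomial_mem_weightFiltration le_rfl)
      (pow_mem_weightFiltration hs p.2.2))

end WeightFiltration

section PowerBasis

variable {K S : Type*} [CommRing S] {d : ℕ}

section

variable [CommRing K] [Algebra K[X] S] {pb : PowerBasis K[X] S} {f : K[X]}

theorem weight_le_of_coeff_repr_gen_pow_mul_ne_zero
    (hgen : pb.gen ^ pb.dim = algebraMap K[X] S f) (hf : f.natDegree ≤ d) {i j k : ℕ} {g : K[X]}
    (hg : g.natDegree ≤ j) {l : Fin pb.dim}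
    (h : (pb.basis.repr (pb.gen ^ i * algebraMap K[X] S g) l).coeff k ≠ 0) :
    d * l + pb.dim * k ≤ d * i + pb.dim * j := by
  induction i using Nat.strong_induction_on generalizing j g with
  | _ i ih =>
  rcases lt_or_ge i pb.dim with hi | hi
  · have hrepr : pb.basis.repr (pb.gen ^ i * algebraMap K[X] S g) = .single ⟨i, hi⟩ g := by
      rw [mul_comm, ← Algebra.smul_def, map_smul, ← pb.basis_eq_pow ⟨i, hi⟩, pb.basis.repr_self,
        Finsupp.smul_single_one]
    rw [hrepr, Finsupp.single_apply] at h
    split_ifs at h with hl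
    · subst hl
      gcongr
      exact (Polynomial.le_natDegree_of_ne_zero h).trans hg
    · exact absurd (Polynomial.coeff_zero k) h
  · obtain ⟨i, rfl⟩ := Nat.exists_eq_add_of_le' hi
    have hred : pb.gen ^ (i + pb.dim) * algebraMap K[X] S g =
        pb.gen ^ i * algebraMap K[X] S (f * g) := by rw [pow_add, hgen, map_mul, mul_assoc]
    have hdim : 0 < pb.dim := l.pos
    have := ih i (by omega) (Polynomial.natDegree_mul_le_of_le hf hg) (hred ▸ h)
    linarith

variable [Algebra K S] [IsScalarTower K K[X] S]

theorem weight_le_of_coeff_repr_ne_zero (hgen : pb.gen ^ pb.dim = algebraMap K[X] S f)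
    (hf : f.natDegree ≤ d) {W k : ℕ} {s : S} {l : Fin pb.dim}
    (hs : s ∈ weightFiltration K pb.gen (algebraMap K[X] S Polynomial.X) d pb.dim W)
    (h : (pb.basis.repr s l).coeff k ≠ 0) : d * l + pb.dim * k ≤ W := by
  induction hs using Submodule.span_induction with
  | mem s hs =>
    obtain ⟨i, j, hij, rfl⟩ := hs
    rw [← map_pow] at h
    exact (weight_le_of_coeff_repr_gen_pow_mul_ne_zero hgen hf
      (Polynomial.natDegree_X_pow_le j) h).trans hij
  | zero => simp at h
  | add s t _ _ ihs iht =>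
    rw [map_add, Finsupp.add_apply, Polynomial.coeff_add] at h
    by_cases h0 : (pb.basis.repr s l).coeff k = 0
    · exact iht (by simpa [h0] using h)
    · exact ihs h0
  | smul c s _ ih =>
    refine ih fun h0 => h ?_
    rw [← algebraMap_smul K[X] c s, map_smul, Finsupp.smul_apply, smul_eq_mul,
      Polynomial.algebraMap_apply, Algebra.algebraMap_self_apply, Polynomial.coeff_C_mul, h0,
      mul_zero]

end

theorem finrank_quotient_span_le_of_mem_weightFiltration [Field K] [IsDomain S] [Algebra K[X] S]
    [Algebra K S] [IsScalarTower K K[X] S] {pb : PowerBasis K[X] S} {f : K[X]}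
    (hgen : pb.gen ^ pb.dim = algebraMap K[X] S f) (hf : f.natDegree ≤ d) {W : ℕ} {s : S}
    (hs0 : s ≠ 0)
    (hs : s ∈ weightFiltration K pb.gen (algebraMap K[X] S Polynomial.X) d pb.dim W) :
    Module.finrank K (S ⧸ Ideal.span {s}) ≤ W := by
  rw [finrank_quotient_span_eq_natDegree_norm pb.basis hs0, Algebra.norm_eq_matrix_det pb.basis]
  have hdim : 0 < pb.dim := pb.dim_pos
  have hentry (i j : Fin pb.dim) (hij : Algebra.leftMulMatrix pb.basis s i j ≠ 0) :
      pb.dim * (Algebra.leftMulMatrix pb.basis s i j).natDegree + d * i ≤ W + d * j := by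
    have hmem := mul_mem_weightFiltration hs
      (monomial_mem_weightFiltration (i := j) (j := 0) le_rfl)
    rw [pow_zero, mul_one, mul_zero, add_zero, ← pb.basis_eq_pow] at hmem
    rw [Algebra.leftMulMatrix_eq_repr_mul] at hij ⊢
    rw [add_comm]
    exact weight_le_of_coeff_repr_ne_zero hgen hf hmem (Polynomial.leadingCoeff_ne_zero.2 hij)
  refine Nat.le_of_mul_le_mul_left ?_ hdim
  simpa using mul_natDegree_det_le hentry

end PowerBasis

section FiniteField

variable {q : ℕ} {F : Type*} [Field F] [Fintype F]

theorem one_lt_of_card_eq_pow {n : ℕ} (hF : Fintype.card F = q ^ n) : 1 < q := by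
  by_contra! h
  exact (Fintype.one_lt_card (α := F)).not_ge (hF ▸ pow_le_one₀ q.zero_le h)

theorem add_pow_of_card_eq_pow {n : ℕ} (hn : n ≠ 0) (hF : Fintype.card F = q ^ n) {A : Type*}
    [CommRing A] [Nontrivial A] [Algebra F A] (a b : A) : (a + b) ^ q = a ^ q + b ^ q := by
  obtain ⟨p, _, k, hp, hcard⟩ := FiniteField.card' F
  obtain ⟨l, -, rfl⟩ := (Nat.dvd_prime_pow hp).1 (hcard ▸ hF ▸ dvd_pow_self q hn)
  have : Fact p.Prime := ⟨hp⟩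
  have : CharP A p := charP_of_injective_algebraMap' F p
  exact add_pow_char_pow ..

theorem X_pow_add_X_sub_C_dvd_X_pow_card_sub_X (hF : Fintype.card F = q ^ 2) {t : F}
    (ht : t ^ q = t) :
    (Polynomial.X ^ q + Polynomial.X - Polynomial.C t : F[X]) ∣
      Polynomial.X ^ Fintype.card F - Polynomial.X := by
  set f : F[X] := Polynomial.X ^ q + Polynomial.X - Polynomial.C t with hf
  have hq : q ≠ 0 := (one_lt_of_card_eq_pow hF).ne_bot
  have hfq : f ^ q - f = Polynomial.X ^ Fintype.card F - Polynomial.X := by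
    have hpow := add_pow_of_card_eq_pow two_ne_zero hF f (Polynomial.C t)
    rw [hf, sub_add_cancel, add_pow_of_card_eq_pow two_ne_zero hF, ← pow_mul, ← sq, ← hF,
      ← map_pow, ht] at hpow
    linear_combination -hpow
  exact hfq ▸ dvd_sub (dvd_pow_self f hq) dvd_rfl

theorem prod_erase_roots_sub_eq_eval_derivative [DecidableEq F] {f : F[X]} (hf : f.Monic)
    (hdvd : f ∣ Polynomial.X ^ Fintype.card F - Polynomial.X) {r : F} (hr : f.eval r = 0) :
    ∏ b ∈ (Finset.univ.filter fun b => f.eval b = 0).erase r, (r - b) = f.derivative.eval r := by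
  have hne : (Polynomial.X ^ Fintype.card F - Polynomial.X : F[X]) ≠ 0 :=
    FiniteField.X_pow_card_sub_X_ne_zero F Fintype.one_lt_card
  have hroots := FiniteField.roots_X_pow_card_sub_X F
  have hnodup : f.roots.Nodup :=
    Multiset.nodup_of_le (Polynomial.roots.le_of_dvd hne hdvd) (hroots ▸ Finset.univ.nodup)
  have hsplits : f.Splits := by
    refine .of_dvd (Polynomial.splits_iff_card_roots.2 ?_) hne hdvd
    rw [hroots, FiniteField.X_pow_card_sub_X_natDegree_eq F Fintype.one_lt_card, Finset.card_val,
      Finset.card_univ]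
  rw [hsplits.eval_root_derivative hf ((Polynomial.mem_roots hf.ne_zero).2 hr),
    ← Finset.prod_mk _ (hnodup.erase r)]
  refine Finset.prod_congr (Finset.ext fun b => ?_) fun _ _ => rfl
  simp [hnodup.mem_erase_iff, hf.ne_zero]

theorem prod_erase_sub_eq_neg_one [DecidableEq F] (r : F) :
    ∏ a ∈ Finset.univ.erase r, (r - a) = -1 := by
  have hmonic : (Polynomial.X ^ Fintype.card F - Polynomial.X : F[X]).Monic :=
    Polynomial.monic_X_pow_sub (by simpa using Fintype.one_lt_card)
  simpa [FiniteField.pow_card, Polynomial.derivative_X_pow, FiniteField.cast_card_eq_zero] using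
    prod_erase_roots_sub_eq_eval_derivative hmonic dvd_rfl (r := r) (by simp [FiniteField.pow_card])

theorem prod_erase_trace_fiber_sub_eq_one [DecidableEq F] (hF : Fintype.card F = q ^ 2) (r : F) :
    ∏ b ∈ (Finset.univ.filter fun b : F => b ^ q + b = r ^ q + r).erase r, (r - b) = 1 := by
  have hq : 1 < q := one_lt_of_card_eq_pow hF
  have htrace : (r ^ q + r) ^ q = r ^ q + r := by
    rw [add_pow_of_card_eq_pow two_ne_zero hF, ← pow_mul, ← sq, ← hF, FiniteField.pow_card,
      add_comm]
  have hcast : (q : F) = 0 := by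
    have := FiniteField.cast_card_eq_zero F
    rw [hF] at this
    simpa using this
  have hmonic : (Polynomial.X ^ q + Polynomial.X - Polynomial.C (r ^ q + r) : F[X]).Monic := by
    rw [add_sub_assoc]
    refine Polynomial.monic_X_pow_add ?_
    rw [Polynomial.degree_X_sub_C]
    exact_mod_cast hq
  simpa [sub_eq_zero, hcast, Polynomial.derivative_pow] using
    prod_erase_roots_sub_eq_eval_derivative hmonic
      (X_pow_add_X_sub_C_dvd_X_pow_card_sub_X hF htrace) (r := r) (by simp)

end FiniteField

section Interpolation

variable {q : ℕ} {F : Type*} [Field F] [Fintype F] [DecidableEq F]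

theorem eval_Hpoly_self (hF : Fintype.card F = q ^ 2) (α β : F) :
    eval ![α, β] (Hpoly q α β) = 1 := by
  simp [Hpoly, Hpoly.Y, prod_erase_sub_eq_neg_one, prod_erase_trace_fiber_sub_eq_one hF, map_prod]

theorem eval_Hpoly_of_ne {α β α' β' : F} (hαβ : α ^ (q + 1) = β ^ q + β)
    (hαβ' : α' ^ (q + 1) = β' ^ q + β') (hne : (α', β') ≠ (α, β)) :
    eval ![α', β'] (Hpoly q α β) = 0 := by
  simp only [Hpoly, Hpoly.Y, map_neg, map_mul, map_prod, map_sub, eval_X, eval_C, neg_eq_zero,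
    mul_eq_zero, Finset.prod_eq_zero_iff]
  by_cases hα : α' = α
  · subst hα
    exact .inr ⟨β', by simp_all, sub_self _⟩
  · exact .inl ⟨α', by simp [hα], sub_self _⟩

theorem eval_sum_C_mul_Hpoly {ι : Type*} [Fintype ι] (hF : Fintype.card F = q ^ 2) {P : ι → F × F}
    (hPinj : Function.Injective P) (hPcurve : ∀ i, (P i).1 ^ (q + 1) = (P i).2 ^ q + (P i).2)
    (v : ι → F) (j : ι) :
    eval ![(P j).1, (P j).2] (∑ i, C (v i) * Hpoly q (P i).1 (P i).2) = v j := by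
  simp only [map_sum, map_mul, eval_C]
  rw [Finset.sum_eq_single_of_mem j (Finset.mem_univ j), eval_Hpoly_self hF, mul_one]
  intro i _ hij
  rw [eval_Hpoly_of_ne (hPcurve i) (hPcurve j) (hPinj.ne hij.symm), mul_zero]

end Interpolation

/-- The equation `x ^ (q + 1) - (y ^ q + y)` of the Hermitian curve, as a polynomial in `x` over
`F[y]`. -/
noncomputable def hermitianPolynomial (q : ℕ) (F : Type*) [Field F] : F[X][X] :=
  Polynomial.X ^ (q + 1) - Polynomial.C (Polynomial.X ^ q + Polynomial.X)

/-- The coordinate ring `F[x, y] / (x ^ (q + 1) - y ^ q - y)` of the Hermitian curve, presented as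
the extension of `F[y]` by the root `x`, so that it is free over `F[y]` with basis
`1, x, …, x ^ q`. -/
abbrev HermitianRing (q : ℕ) (F : Type*) [Field F] : Type _ :=
  AdjoinRoot (hermitianPolynomial q F)

namespace HermitianRing

variable (q : ℕ) (F : Type*) [Field F]

/-- The coordinate function `x` of the Hermitian curve. -/
noncomputable def x : HermitianRing q F := AdjoinRoot.root _

/-- The coordinate function `y` of the Hermitian curve. -/
noncomputable def y : HermitianRing q F := AdjoinRoot.of _ Polynomial.X

theorem monic_hermitianPolynomial : (hermitianPolynomial q F).Monic :=
  Polynomial.monic_X_pow_sub_C _ q.succ_ne_zero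

theorem x_pow_eq : x q F ^ (q + 1) = algebraMap F[X] _ (Polynomial.X ^ q + Polynomial.X) := by
  have h := AdjoinRoot.eval₂_root (hermitianPolynomial q F)
  rwa [hermitianPolynomial, Polynomial.eval₂_sub, Polynomial.eval₂_X_pow, Polynomial.eval₂_C,
    sub_eq_zero] at h

/-- The basis `1, x, …, x ^ q` of the Hermitian ring over `F[y]`. -/
noncomputable def powerBasis : PowerBasis F[X] (HermitianRing q F) :=
  AdjoinRoot.powerBasis' (monic_hermitianPolynomial q F)

theorem powerBasis_dim : (powerBasis q F).dim = q + 1 :=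
  Polynomial.natDegree_X_pow_sub_C

variable {q F}

theorem isDomain (hq : 1 < q) : IsDomain (HermitianRing q F) := by
  refine AdjoinRoot.isDomain_of_prime (Irreducible.prime ?_)
  have hdvd : Polynomial.X ∣ (Polynomial.X ^ q + Polynomial.X : F[X]) :=
    dvd_add (dvd_pow_self _ (by omega)) dvd_rfl
  have hndvd : ¬ Polynomial.X ^ 2 ∣ (Polynomial.X ^ q + Polynomial.X : F[X]) := by
    rw [dvd_add_right (pow_dvd_pow _ hq), Polynomial.X_pow_dvd_iff]
    exact fun h => one_ne_zero (Polynomial.coeff_X_one.symm.trans (h 1 one_lt_two))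
  exact irreducible_X_pow_sub_C_of_prime Polynomial.prime_X hdvd hndvd q.succ_ne_zero

section Lift

variable {A : Type*} [CommRing A] [Algebra F A] {a b : A}

/-- The `F`-algebra homomorphism out of the Hermitian ring given by a solution of the equation of
the curve in `A`; for `A = F` it is the evaluation at a rational point. -/
noncomputable def lift (h : a ^ (q + 1) = b ^ q + b) : HermitianRing q F →ₐ[F] A :=
  AdjoinRoot.liftAlgHom _ (Polynomial.aeval b) a <| by
    rw [hermitianPolynomial, Polynomial.eval₂_sub, Polynomial.eval₂_X_pow, Polynomial.eval₂_C, h]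
    simp

theorem lift_x (h : a ^ (q + 1) = b ^ q + b) : lift h (x q F) = a :=
  AdjoinRoot.liftAlgHom_root ..

theorem lift_y (h : a ^ (q + 1) = b ^ q + b) : lift h (y q F) = b := by
  simp [lift, y]

theorem lift_aeval (h : a ^ (q + 1) = b ^ q + b) (G : MvPolynomial (Fin 2) F) :
    lift h (aeval ![x q F, y q F] G) = aeval ![a, b] G := by
  refine DFunLike.congr_fun (algHom_ext (f := (lift h).comp (aeval ![x q F, y q F])) fun i => ?_) G
  fin_cases i <;> simp [lift_x, lift_y]

end Lift

theorem quotient_mk_eq_zero_of_aeval_eq_zero {G : MvPolynomial (Fin 2) F}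
    (hG : aeval ![x q F, y q F] G = 0) :
    Ideal.Quotient.mk (Ideal.span {(X 0 : MvPolynomial (Fin 2) F) ^ (q + 1) - X 1 ^ q - X 1}) G
      = 0 := by
  set I := Ideal.span {(X 0 : MvPolynomial (Fin 2) F) ^ (q + 1) - X 1 ^ q - X 1}
  have hcurve : Ideal.Quotient.mkₐ F I (X 0) ^ (q + 1) =
      Ideal.Quotient.mkₐ F I (X 1) ^ q + Ideal.Quotient.mkₐ F I (X 1) := by
    simp only [← map_pow, ← map_add]
    refine Ideal.Quotient.eq.2 ?_
    rw [← sub_sub]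
    exact Ideal.mem_span_singleton_self _
  have hmk : aeval ![Ideal.Quotient.mkₐ F I (X 0), Ideal.Quotient.mkₐ F I (X 1)] G =
      Ideal.Quotient.mkₐ F I G := by
    refine DFunLike.congr_fun (algHom_ext (g := Ideal.Quotient.mkₐ F I) fun i => ?_) G
    fin_cases i <;> simp
  rw [← Ideal.Quotient.mkₐ_eq_mk F, ← hmk, ← lift_aeval hcurve, hG, map_zero]

/-- Evaluation of functions on the Hermitian curve at the rational point `(α, β)`. -/
noncomputable abbrev evalAt {α β : F} (h : α ^ (q + 1) = β ^ q + β) : HermitianRing q F →ₐ[F] F :=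
  lift h

theorem ker_evalAt_ne_bot {α β : F} (h : α ^ (q + 1) = β ^ q + β) :
    RingHom.ker (evalAt h) ≠ ⊥ := by
  have hmem : algebraMap F[X] (HermitianRing q F) (Polynomial.X - Polynomial.C β) ∈
      RingHom.ker (evalAt h) := by
    rw [RingHom.mem_ker]
    simp [lift]
  refine fun hbot => Polynomial.X_sub_C_ne_zero β
    (AdjoinRoot.of.injective_of_degree_ne_zero (f := hermitianPolynomial q F) ?_ ?_)
  · rw [hermitianPolynomial, Polynomial.degree_X_pow_sub_C q.succ_pos]
    exact_mod_cast q.succ_ne_zero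
  · rw [map_zero]
    exact (Submodule.mem_bot _).1 (hbot ▸ hmem)

theorem evalAt_injective {ι : Type*} {P : ι → F × F} (hPinj : Function.Injective P)
    (hPcurve : ∀ i, (P i).1 ^ (q + 1) = (P i).2 ^ q + (P i).2) :
    Function.Injective fun i => evalAt (hPcurve i) := by
  refine fun i j hij => hPinj (Prod.ext ?_ ?_)
  · simpa only [lift_x] using DFunLike.congr_fun hij (x q F)
  · simpa only [lift_y] using DFunLike.congr_fun hij (y q F)

theorem finrank_quotient_span_le (hq : 1 < q) {g : HermitianRing q F} (hg : g ≠ 0) {W : ℕ}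
    (hweight : g ∈ weightFiltration F (x q F) (y q F) q (q + 1) W) :
    Module.finrank F (HermitianRing q F ⧸ Ideal.span {g}) ≤ W := by
  have := isDomain (F := F) hq
  have hgen : (powerBasis q F).gen ^ (powerBasis q F).dim =
      algebraMap F[X] _ (Polynomial.X ^ q + Polynomial.X) := by
    rw [powerBasis_dim]
    exact x_pow_eq q F
  have hdeg : (Polynomial.X ^ q + Polynomial.X : F[X]).natDegree ≤ q := by
    compute_degree!
    exact hq.le
  refine finrank_quotient_span_le_of_mem_weightFiltration hgen hdeg hg ?_
  rw [powerBasis_dim]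
  exact hweight

theorem eq_zero_of_mem_ker_evalAt_pow (hq : 1 < q) {ι : Type*} [Fintype ι] {P : ι → F × F}
    (hPinj : Function.Injective P)
    (hPcurve : ∀ i, (P i).1 ^ (q + 1) = (P i).2 ^ q + (P i).2) {g : HermitianRing q F} {m W : ℕ}
    (hker : ∀ i, g ∈ RingHom.ker (evalAt (hPcurve i)) ^ m)
    (hweight : g ∈ weightFiltration F (x q F) (y q F) q (q + 1) W)
    (hW : W < m * Fintype.card ι) : g = 0 := by
  have := isDomain (F := F) hq
  by_contra hg
  have : Module.Finite F (HermitianRing q F ⧸ Ideal.span {g}) :=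
    finite_quotient_of_basis (powerBasis q F).basis (by simpa using hg)
  have hzeros : m * Fintype.card ι ≤ Module.finrank F (HermitianRing q F ⧸ Ideal.span {g}) :=
    mul_card_le_finrank_quotient (evalAt_injective hPinj hPcurve) (fun _ => ker_evalAt_ne_bot _)
      fun i => (Ideal.span_singleton_le_iff_mem _).2 (hker i)
  exact (hW.trans_le (hzeros.trans (finrank_quotient_span_le hq hg hweight))).false

/-- The substitution `z = s`, as a homomorphism from the ring of polynomials in `z` over the
coordinate ring of the Hermitian curve. -/
noncomputable def substZ (s : HermitianRing q F) :
    (MvPolynomial (Fin 3) F ⧸ Ideal.span {(X 0 : MvPolynomial (Fin 3) F) ^ (q + 1) - X 1 ^ q - X 1})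
      →ₐ[F] HermitianRing q F :=
  Ideal.Quotient.liftₐ _ (aeval ![x q F, y q F, s]) <| by
    refine fun p hp => (Ideal.span_singleton_le_iff_mem (RingHom.ker _)).2 ?_ hp
    simp [RingHom.mem_ker, x_pow_eq, y, AdjoinRoot.algebraMap_eq]

theorem substZ_mk (s : HermitianRing q F) (p : MvPolynomial (Fin 3) F) :
    substZ s (Ideal.Quotient.mk _ p) = aeval ![x q F, y q F, s] p :=
  rfl

theorem aeval_aeval_eq_substZ (M : MvPolynomial (Fin 2) F) (p : MvPolynomial (Fin 3) F) :
    aeval ![x q F, y q F] (aeval ![X 0, X 1, M] p) =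
      substZ (aeval ![x q F, y q F] M) (Ideal.Quotient.mk _ p) := by
  rw [substZ_mk]
  refine DFunLike.congr_fun (algHom_ext (f := (aeval ![x q F, y q F]).comp
    (aeval ![X 0, X 1, M])) fun i => ?_) p
  fin_cases i <;> simp

theorem evalAt_aeval_rename {α β : F} (h : α ^ (q + 1) = β ^ q + β) (s : HermitianRing q F)
    (G : MvPolynomial (Fin 2) F) :
    evalAt h (aeval ![x q F, y q F, s] (rename Fin.castSucc G)) = eval ![α, β] G := by
  rw [aeval_rename, ← aeval_eq_eval, ← lift_aeval h]
  congr 3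
  ext i
  fin_cases i <;> rfl

theorem substZ_mem_ker_evalAt_pow [Fintype F] (hF : Fintype.card F = q ^ 2) {α β : F}
    (h : α ^ (q + 1) = β ^ q + β) {s : HermitianRing q F} {H : MvPolynomial (Fin 2) F}
    (hs : evalAt h s = eval ![α, β] H) {m : ℕ}
    {f : MvPolynomial (Fin 3) F ⧸
      Ideal.span {(X 0 : MvPolynomial (Fin 3) F) ^ (q + 1) - X 1 ^ q - X 1}}
    (hf : f ∈ Ideal.span {Ideal.Quotient.mk _ (X 2 - rename (Fin.castSucc : Fin 2 → Fin 3) H),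
      Ideal.Quotient.mk _ ((X 0 : MvPolynomial (Fin 3) F) ^ (q ^ 2) - X 0)} ^ m) :
    substZ s f ∈ RingHom.ker (evalAt h) ^ m := by
  refine Ideal.pow_right_mono (Ideal.map_le_iff_le_comap.2 (Ideal.span_le.2 ?_)) m
    (Ideal.map_pow (substZ s) _ m ▸ Ideal.mem_map_of_mem _ hf)
  rintro _ (rfl | rfl) <;>
    simp only [SetLike.mem_coe, Ideal.mem_comap, RingHom.mem_ker, substZ_mk, map_sub, map_pow,
      aeval_X, sub_eq_zero]
  · rw [evalAt_aeval_rename]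
    exact hs
  · rw [← hF]
    exact FiniteField.pow_card _

end HermitianRing

theorem lt_mul_card_of_card_lt_card_sub_div {ι : Type*} [Fintype ι] {p : ι → Prop} [DecidablePred p]
    {m w : ℕ} (hm : 1 ≤ m)
    (h : ((Finset.univ.filter fun i => ¬ p i).card : ℚ) < Fintype.card ι - (w : ℚ) / m) :
    w < m * Fintype.card {i // p i} := by
  have hm' : (0 : ℚ) < m := by exact_mod_cast hm
  have hcard : (Fintype.card {i // p i} : ℚ) + (Finset.univ.filter fun i => ¬ p i).card =
      Fintype.card ι := by
    rw [Fintype.card_subtype]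
    exact_mod_cast Finset.card_filter_add_card_filter_not p
  have hdiv : (w : ℚ) / m < Fintype.card {i // p i} := by linarith
  rw [div_lt_iff₀' hm'] at hdiv
  exact_mod_cast hdiv

theorem stmt_9_general {q : ℕ} {F : Type*} [Field F] [Fintype F] [DecidableEq F]
    (hF : Fintype.card F = q ^ 2) {u m : ℕ} (hm : 1 ≤ m) {ι : Type*} [Fintype ι] {P : ι → F × F}
    (hPinj : Function.Injective P)
    (hPcurve : ∀ i, (P i).1 ^ (q + 1) = (P i).2 ^ q + (P i).2) (v : ι → F)
    {c : (ℕ × Fin q × ℕ) →₀ F}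
    (hfI : Ideal.Quotient.mk
        (Ideal.span {(X 0 : MvPolynomial (Fin 3) F) ^ (q + 1) - X 1 ^ q - X 1}) (monoSum3 c) ∈
      (Ideal.span
        { Ideal.Quotient.mk _ (X 2 - rename (Fin.castSucc : Fin 2 → Fin 3)
            (∑ i, C (v i) * Hpoly q (P i).1 (P i).2)),
          Ideal.Quotient.mk _ ((X 0 : MvPolynomial (Fin 3) F) ^ (q ^ 2) - X 0) }) ^ m)
    {w : ℕ}
    (hw : ∀ p ∈ c.support, q * p.1 + (q + 1) * (p.2.1 : ℕ) + u * p.2.2 ≤ w)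
    {M : MvPolynomial (Fin 2) F} {d : (ℕ × Fin q) →₀ F}
    (hM : M = ∑ p ∈ d.support, C (d p) * X 0 ^ p.1 * X 1 ^ (p.2 : ℕ))
    (hMdeg : ∀ p ∈ d.support, q * p.1 + (q + 1) * (p.2 : ℕ) ≤ u)
    (htw : ((Finset.univ.filter fun i => eval ![(P i).1, (P i).2] M ≠ v i).card : ℚ) <
      Fintype.card ι - (w : ℚ) / m) :
    Ideal.Quotient.mk (Ideal.span {(X 0 : MvPolynomial (Fin 2) F) ^ (q + 1) - X 1 ^ q - X 1})
      (aeval ![X 0, X 1, M] (monoSum3 c)) = 0 := by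
  refine HermitianRing.quotient_mk_eq_zero_of_aeval_eq_zero ?_
  rw [HermitianRing.aeval_aeval_eq_substZ]
  let good := {i // eval ![(P i).1, (P i).2] M = v i}
  refine HermitianRing.eq_zero_of_mem_ker_evalAt_pow (ι := good) (one_lt_of_card_eq_pow hF)
    (hPinj.comp Subtype.val_injective) (fun i => hPcurve i) (fun ⟨i, hi⟩ => ?_)
    (aeval_monoSum3_mem_weightFiltration ?_ hw) (lt_mul_card_of_card_lt_card_sub_div hm htw)
  · refine HermitianRing.substZ_mem_ker_evalAt_pow hF (hPcurve i) ?_ hfI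
    rw [HermitianRing.lift_aeval, aeval_eq_eval, eval_sum_C_mul_Hpoly hF hPinj hPcurve]
    exact hi
  · rw [hM]
    exact aeval_sum_mem_weightFiltration hMdeg

/-- Fundamental theorem of list decoding of Hermitian codes: if `f ∈ I_{v,m} = ⟨z−h_v, η⟩^m`
is nonzero of `u`-weighted degree `w`, `μ ∈ L(uP∞)` with evaluation at Hamming distance
`t < n − w/m` from `v`, then `f(μ) = 0` in `R`. -/
theorem stmt_9 (q : ℕ) (hq : IsPrimePow q) (F : Type*) [Field F] [Fintype F] [DecidableEq F]
    (hF : Fintype.card F = q ^ 2)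
    (u m : ℕ) (hu : 1 ≤ u) (hm : 1 ≤ m)
    (P : Fin (q ^ 3) → F × F)
    (hPinj : Function.Injective P)
    (hPcurve : ∀ i, (P i).1 ^ (q + 1) = (P i).2 ^ q + (P i).2)
    (hPsurj : ∀ a b : F, a ^ (q + 1) = b ^ q + b → ∃ i, P i = (a, b))
    (v : Fin (q ^ 3) → F)
    -- `f`, given by its unique representation `c` as a linear combination of monomials
    (c : (ℕ × Fin q × ℕ) →₀ F) (hc : c ≠ 0)
    (hfI : Ideal.Quotient.mk
        (Ideal.span {(X 0 : MvPolynomial (Fin 3) F) ^ (q + 1) - X 1 ^ q - X 1})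
        (monoSum3 c) ∈
      (Ideal.span
        { Ideal.Quotient.mk
            (Ideal.span {(X 0 : MvPolynomial (Fin 3) F) ^ (q + 1) - X 1 ^ q - X 1})
            (X 2 - MvPolynomial.rename (Fin.castSucc : Fin 2 → Fin 3)
              (∑ i, C (v i) * Hpoly q (P i).1 (P i).2)),
          Ideal.Quotient.mk
            (Ideal.span {(X 0 : MvPolynomial (Fin 3) F) ^ (q + 1) - X 1 ^ q - X 1})
            ((X 0 : MvPolynomial (Fin 3) F) ^ (q ^ 2) - X 0) }) ^ m)
    (hf0 : Ideal.Quotient.mk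
        (Ideal.span {(X 0 : MvPolynomial (Fin 3) F) ^ (q + 1) - X 1 ^ q - X 1})
        (monoSum3 c) ≠ 0)
    -- `w = deg_u(f)`
    (w : ℕ) (hw : w = c.support.sup fun p => q * p.1 + (q + 1) * (p.2.1 : ℕ) + u * p.2.2)
    -- `M ∈ F[X,Y]` whose residue class `μ` lies in `L(uP∞)`
    (M : MvPolynomial (Fin 2) F) (d : (ℕ × Fin q) →₀ F)
    (hM : M = ∑ p ∈ d.support, C (d p) * X 0 ^ p.1 * X 1 ^ (p.2 : ℕ))
    (hMdeg : ∀ p ∈ d.support, q * p.1 + (q + 1) * (p.2 : ℕ) ≤ u)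
    -- `t = d(v, ev(μ))`
    (t : ℕ)
    (ht : t = (Finset.univ.filter fun i : Fin (q ^ 3) =>
      MvPolynomial.eval ![(P i).1, (P i).2] M ≠ v i).card)
    (htw : (t : ℚ) < (q : ℚ) ^ 3 - (w : ℚ) / (m : ℚ)) :
    -- conclusion: `f(μ) = 0` in `R`
    Ideal.Quotient.mk
      (Ideal.span {(X 0 : MvPolynomial (Fin 2) F) ^ (q + 1) - X 1 ^ q - X 1})
      (MvPolynomial.aeval ![X 0, X 1, M] (monoSum3 c)) = 0 := by
  subst ht
  exact stmt_9_general hF hm hPinj hPcurve v hfI (fun p hp => hw ▸ Finset.le_sup hp) hM hMdeg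
    (by simpa using htw)
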